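/- Let 2 < m ≤ n and let S_m = {w ∈ ℂ^{n+1} \ {0} : w real, w_{m+1} = ⋯ = w_n = 0, and ⟨w,w⟩ = 0}. Then the set Ω̃ = {z ∈ ℂ^{n+1} \ {0} : ⟨z,w⟩ ≠ 0 for every w ∈ S_m} is open in ℂ^{n+1} and is connected (in the subspace topology). -/

import Mathlib

open scoped ComplexConjugate

noncomputable def herm (n : ℕ) (z w : Fin (n + 1) → ℂ) : ℂ :=
  (∑ j : Fin n, z j.castSucc * conj (w j.castSucc)) - z (Fin.last n) * conj (w (Fin.last n))

def conjVec (n : ℕ) (z : Fin (n + 1) → ℂ) : Fin (n + 1) → ℂ := fun j => conj (z j)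

noncomputable def fdet (n : ℕ) (z : Fin (n + 1) → ℂ) : ℝ :=
  Complex.normSq (herm n z (conjVec n z)) - ((herm n z z).re) ^ 2

def IsRealVec (n : ℕ) (z : Fin (n + 1) → ℂ) : Prop := conjVec n z = z

def Scone (n : ℕ) : Set (Fin (n + 1) → ℂ) :=
  {w | w ≠ 0 ∧ IsRealVec n w ∧ herm n w w = 0}

def LambdaCone (n : ℕ) : Set (Fin (n + 1) → ℂ) :=
  {z | z ≠ 0 ∧ ∃ w ∈ Scone n, herm n z w = 0}

/-- The cone over the real `(m−1)`-sphere `∂H_ℝᵐ ⊂ ℙ_ℂⁿ`. -/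
def SmCone (m n : ℕ) : Set (Fin (n + 1) → ℂ) :=
  {w | w ≠ 0 ∧ IsRealVec n w ∧
    (∀ j : Fin (n + 1), m ≤ (j : ℕ) → (j : ℕ) < n → w j = 0) ∧ herm n w w = 0}

/-! A real linear map from a space of dimension `> 2` to `ℂ` has a nonzero kernel, and sliding a
point of the closed unit ball along the kernel brings it to the unit sphere, so the map has the same
values on the sphere as on the ball. Up to a real factor, a vector of `SmCone m n` is `(v, 0, 1)`
with `v` on the unit sphere of `ℝᵐ`. Hence `z` lies in the cone over the discontinuity region
exactly when its last coordinate avoids the values of `v ↦ ∑ i, v i * z i` on the unit ball, a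
condition that survives shrinking the other coordinates of `z` to zero. This retracts the cone onto
the punctured line `{(0, …, 0, t) | t ≠ 0}`. -/

open Metric Module

section AvoidingPairs

theorem image_sphere_eq_image_closedBall {E G : Type*} [NormedAddCommGroup E] [NormedSpace ℝ E]
    [AddCommGroup G] [Module ℝ G] {φ : E →ₗ[ℝ] G} (hφ : LinearMap.ker φ ≠ ⊥) (x : E) (r : ℝ) :
    φ '' sphere x r = φ '' closedBall x r := by
  refine (Set.image_mono sphere_subset_closedBall).antisymm ?_
  rintro _ ⟨u, hu, rfl⟩
  obtain ⟨k, hk, hk0⟩ := (Submodule.ne_bot_iff _).1 hφ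
  have hcont : Continuous fun a : ℝ => ‖u - x + a • k‖ := by fun_prop
  have hfar : r ≤ ‖u - x + ((r + ‖u - x‖) / ‖k‖) • k‖ := by
    calc r ≤ ‖((r + ‖u - x‖) / ‖k‖) • k‖ - ‖u - x‖ := by
          rw [norm_smul, Real.norm_eq_abs, abs_div, abs_norm,
            div_mul_cancel₀ _ (norm_ne_zero_iff.2 hk0)]
          linarith [le_abs_self (r + ‖u - x‖)]
      _ ≤ _ := by simpa [add_comm] using norm_sub_le_norm_add (((r + ‖u - x‖) / ‖k‖) • k) (u - x)
  obtain ⟨a, ha : ‖u - x + a • k‖ = r⟩ := mem_range_of_exists_le_of_exists_ge hcont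
    ⟨0, by simpa [← dist_eq_norm] using hu⟩ ⟨_, hfar⟩
  refine ⟨u + a • k, ?_, ?_⟩
  · rwa [mem_sphere_iff_norm, add_sub_right_comm]
  · simp [LinearMap.mem_ker.1 hk]

variable {W E G : Type*} [AddCommGroup W] [Module ℝ W] [NormedAddCommGroup E] [NormedSpace ℝ E]
  [NormedAddCommGroup G] [NormedSpace ℝ G] {B : W →ₗ[ℝ] E →ₗ[ℝ] G}

/-- The pairs `(t, w)` such that the value `t` is not attained by the linear map `B w` on the unit
sphere. -/
def avoidingPairs (B : W →ₗ[ℝ] E →ₗ[ℝ] G) : Set (G × W) :=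
  {p | ∀ u ∈ sphere (0 : E) 1, B p.2 u ≠ p.1}

theorem isOpen_avoidingPairs [TopologicalSpace W] [ProperSpace E]
    (hB : Continuous fun p : W × E => B p.1 p.2) : IsOpen (avoidingPairs B) := by
  refine isOpen_iff_mem_nhds.2 fun p hp => ?_
  refine (isCompact_sphere (0 : E) 1).eventually_forall_of_forall_eventually fun u hu => ?_
  have hvalue : Continuous fun q : (G × W) × E => B q.1.2 q.2 :=
    hB.comp (f := fun q : (G × W) × E => (q.1.2, q.2)) (by fun_prop)
  have htarget : Continuous fun q : (G × W) × E => q.1.1 := by fun_prop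
  exact (isOpen_ne_fun hvalue htarget).mem_nhds (hp u hu)

theorem mem_avoidingPairs_iff_forall_mem_closedBall [FiniteDimensional ℝ E]
    [FiniteDimensional ℝ G] (hdim : finrank ℝ G < finrank ℝ E) {p : G × W} :
    p ∈ avoidingPairs B ↔ ∀ u ∈ closedBall (0 : E) 1, B p.2 u ≠ p.1 := by
  have himage := image_sphere_eq_image_closedBall
    (LinearMap.ker_ne_bot_of_finrank_lt (f := B p.2) hdim) 0 1
  simpa [avoidingPairs] using not_congr (Set.ext_iff.1 himage p.1)

theorem fst_ne_zero_of_mem_avoidingPairs [FiniteDimensional ℝ E] [FiniteDimensional ℝ G]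
    (hdim : finrank ℝ G < finrank ℝ E) {p : G × W} (hp : p ∈ avoidingPairs B) : p.1 ≠ 0 := by
  simpa using
    ((mem_avoidingPairs_iff_forall_mem_closedBall hdim).1 hp 0 (by simp)).symm

theorem smul_snd_mem_avoidingPairs [FiniteDimensional ℝ E] [FiniteDimensional ℝ G]
    (hdim : finrank ℝ G < finrank ℝ E) {p : G × W} (hp : p ∈ avoidingPairs B) {s : ℝ}
    (hs : s ∈ Set.Icc (0 : ℝ) 1) : (p.1, s • p.2) ∈ avoidingPairs B := by
  rw [mem_avoidingPairs_iff_forall_mem_closedBall hdim] at hp ⊢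
  intro u hu
  have hsu : s • u ∈ closedBall (0 : E) 1 := by
    rw [mem_closedBall_zero_iff] at hu ⊢
    rw [norm_smul, Real.norm_of_nonneg hs.1]
    exact mul_le_one₀ hs.2 (norm_nonneg u) hu
  simpa using hp (s • u) hsu

theorem compl_zero_prod_zero_subset_avoidingPairs : {0}ᶜ ×ˢ {0} ⊆ avoidingPairs B := by
  rintro ⟨t, w⟩ ⟨ht, rfl⟩ u -
  simpa [eq_comm] using ht

theorem isPathConnected_avoidingPairs [TopologicalSpace W] [ContinuousSMul ℝ W]
    [FiniteDimensional ℝ E] [FiniteDimensional ℝ G] (hG : 1 < finrank ℝ G)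
    (hdim : finrank ℝ G < finrank ℝ E) : IsPathConnected (avoidingPairs B) := by
  have haxis : IsPathConnected ({0}ᶜ ×ˢ {0} : Set (G × W)) :=
    (isPathConnected_compl_singleton_of_one_lt_rank (one_lt_rank_of_one_lt_finrank hG) 0).prod
      (isPathConnected_singleton 0)
  obtain ⟨base, hbase⟩ := haxis.nonempty
  refine ⟨base, compl_zero_prod_zero_subset_avoidingPairs hbase, fun {p} hp => ?_⟩
  have hp0 : p.1 ≠ 0 := fst_ne_zero_of_mem_avoidingPairs hdim hp
  have hfoot : (p.1, (0 : W)) ∈ ({0}ᶜ ×ˢ {0} : Set (G × W)) := ⟨hp0, rfl⟩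
  have hshrink : JoinedIn (avoidingPairs B) (p.1, 0) p := by
    refine JoinedIn.ofLine (f := fun s : ℝ => (p.1, s • p.2)) (by fun_prop) (by simp) (by simp) ?_
    rintro _ ⟨s, hs, rfl⟩
    exact smul_snd_mem_avoidingPairs hdim hp hs
  exact ((haxis.joinedIn _ hbase _ hfoot).mono compl_zero_prod_zero_subset_avoidingPairs).trans
    hshrink

end AvoidingPairs

section RealNullVectors

variable {m n : ℕ}

/-- The real vector `(v, 0, c)` of `ℂⁿ⁺¹`, with `v` in the first `m` coordinates (truncated if
`n < m`) and `c` in the last one. -/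
def realVec (n : ℕ) (v : EuclideanSpace ℝ (Fin m)) (c : ℝ) : Fin (n + 1) → ℂ :=
  Fin.snoc (fun j : Fin n => if h : (j : ℕ) < m then (v ⟨j, h⟩ : ℂ) else 0) (c : ℂ)

@[simp]
theorem realVec_last (v : EuclideanSpace ℝ (Fin m)) (c : ℝ) : realVec n v c (Fin.last n) = c := by
  simp [realVec]

theorem realVec_castSucc (v : EuclideanSpace ℝ (Fin m)) (c : ℝ) (j : Fin n) :
    realVec n v c j.castSucc = if h : (j : ℕ) < m then (v ⟨j, h⟩ : ℂ) else 0 := by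
  simp [realVec]

theorem realVec_castLE (hmn : m ≤ n) (v : EuclideanSpace ℝ (Fin m)) (c : ℝ) (i : Fin m) :
    realVec n v c (Fin.castLE (hmn.trans n.le_succ) i) = v i := by
  simpa using realVec_castSucc v c (Fin.castLE hmn i)

theorem isRealVec_realVec (v : EuclideanSpace ℝ (Fin m)) (c : ℝ) : IsRealVec n (realVec n v c) := by
  funext j
  induction j using Fin.lastCases with
  | last => simp [conjVec]
  | cast j => by_cases h : (j : ℕ) < m <;> simp [conjVec, realVec_castSucc, h]

theorem exists_realVec_eq (hmn : m ≤ n) {w : Fin (n + 1) → ℂ} (hreal : IsRealVec n w)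
    (hzero : ∀ j : Fin (n + 1), m ≤ (j : ℕ) → (j : ℕ) < n → w j = 0) :
    ∃ (v : EuclideanSpace ℝ (Fin m)) (c : ℝ), realVec n v c = w := by
  have hre (j) : ((w j).re : ℂ) = w j := Complex.conj_eq_iff_re.1 (congrFun hreal j)
  refine ⟨WithLp.toLp 2 fun i => (w (Fin.castLE hmn i).castSucc).re, (w (Fin.last n)).re, ?_⟩
  funext j
  induction j using Fin.lastCases with
  | last => simp [hre]
  | cast j =>
    by_cases h : (j : ℕ) < m
    · rw [realVec_castSucc, dif_pos h]
      exact hre j.castSucc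
    · simpa [realVec_castSucc, h] using (hzero j.castSucc (by simpa using h) (by simp)).symm

/-- The pairing `(z, v) ↦ ∑ i, v i * z i` of `ℂⁿ` with `ℝᵐ`, which sees only the first `m`
coordinates of `z`. -/
noncomputable def coordPairing (hmn : m ≤ n) :
    (Fin n → ℂ) →ₗ[ℝ] EuclideanSpace ℝ (Fin m) →ₗ[ℝ] ℂ :=
  (Fintype.bilinearCombination ℝ ℝ ∘ₗ LinearMap.funLeft ℝ ℂ (Fin.castLE hmn)).compl₂
    (WithLp.linearEquiv 2 ℝ (Fin m → ℝ)).toLinearMap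

theorem coordPairing_apply (hmn : m ≤ n) (z : Fin n → ℂ) (v : EuclideanSpace ℝ (Fin m)) :
    coordPairing hmn z v = ∑ i, (v i : ℂ) * z (Fin.castLE hmn i) := by
  simp [coordPairing, Fintype.bilinearCombination_apply, Fintype.linearCombination_apply,
    LinearMap.funLeft_apply]

theorem continuous_coordPairing (hmn : m ≤ n) :
    Continuous fun p : (Fin n → ℂ) × EuclideanSpace ℝ (Fin m) => coordPairing hmn p.1 p.2 := by
  simp only [coordPairing_apply]
  fun_prop

theorem herm_realVec (hmn : m ≤ n) (z : Fin (n + 1) → ℂ) (v : EuclideanSpace ℝ (Fin m)) (c : ℝ) :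
    herm n z (realVec n v c) = coordPairing hmn (Fin.init z) v - c * z (Fin.last n) := by
  have hconj (j) : conj (realVec n v c j) = realVec n v c j := congrFun (isRealVec_realVec v c) j
  simp only [herm, hconj, realVec_last, Complex.conj_ofReal, coordPairing_apply, mul_comm (z _)]
  congr 1
  refine (Fintype.sum_of_injective _ (Fin.castLE_injective hmn) _ _ (fun j hj => ?_)
    fun i => ?_).symm
  · have hj : ¬(j : ℕ) < m := fun h => hj ⟨⟨j, h⟩, rfl⟩
    simp [realVec_castSucc, hj]
  · simp [realVec_castLE hmn, Fin.init]

theorem herm_realVec_self (hmn : m ≤ n) (v : EuclideanSpace ℝ (Fin m)) (c : ℝ) :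
    herm n (realVec n v c) (realVec n v c) = ((‖v‖ ^ 2 - c ^ 2 : ℝ) : ℂ) := by
  rw [herm_realVec hmn, coordPairing_apply, EuclideanSpace.real_norm_sq_eq]
  simp [Fin.init, realVec_castLE hmn, sq]

theorem realVec_ne_zero (v : EuclideanSpace ℝ (Fin m)) {c : ℝ} (hc : c ≠ 0) :
    realVec n v c ≠ 0 := fun h => hc <| by simpa using congrFun h (Fin.last n)

theorem realVec_mem_SmCone (hmn : m ≤ n) {v : EuclideanSpace ℝ (Fin m)} {c : ℝ} (hc : c ≠ 0)
    (hv : ‖v‖ = |c|) : realVec n v c ∈ SmCone m n := by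
  refine ⟨realVec_ne_zero v hc, isRealVec_realVec v c, fun j hmj hjn => ?_, ?_⟩
  · rw [← Fin.castSucc_castLT j hjn, realVec_castSucc]
    simp [hmj]
  · simp [herm_realVec_self hmn, hv]

theorem exists_realVec_eq_of_mem_SmCone (hmn : m ≤ n) {w : Fin (n + 1) → ℂ} (hw : w ∈ SmCone m n) :
    ∃ (v : EuclideanSpace ℝ (Fin m)) (c : ℝ), c ≠ 0 ∧ ‖v‖ = |c| ∧ realVec n v c = w := by
  obtain ⟨hw0, hreal, hzero, hnull⟩ := hw
  obtain ⟨v, c, rfl⟩ := exists_realVec_eq hmn hreal hzero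
  have hv : ‖v‖ = |c| := by
    rw [herm_realVec_self hmn, Complex.ofReal_eq_zero, sub_eq_zero] at hnull
    rw [← abs_norm, ← sq_eq_sq_iff_abs_eq_abs, hnull]
  refine ⟨v, c, ?_, hv, rfl⟩
  rintro rfl
  obtain rfl : v = 0 := by simpa using hv
  refine hw0 (funext fun j => ?_)
  induction j using Fin.lastCases with
  | last => simp
  | cast j => simp [realVec_castSucc]

theorem forall_mem_SmCone_herm_ne_zero_iff (hmn : m ≤ n) (z : Fin (n + 1) → ℂ) :
    (∀ w ∈ SmCone m n, herm n z w ≠ 0) ↔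
      (z (Fin.last n), Fin.init z) ∈ avoidingPairs (coordPairing hmn) := by
  constructor
  · intro hz v hv
    have hne := hz _ (realVec_mem_SmCone hmn one_ne_zero (by simpa using hv))
    simpa [herm_realVec hmn, sub_ne_zero] using hne
  · intro hz w hw hperp
    obtain ⟨v, c, hc, hv, rfl⟩ := exists_realVec_eq_of_mem_SmCone hmn hw
    rw [herm_realVec hmn, sub_eq_zero] at hperp
    refine hz (c⁻¹ • v) ?_ ?_
    · simp [norm_smul, hv, hc]
    · simp [hperp, hc]

theorem ne_zero_of_mem_avoidingPairs (hm : 0 < m) (hmn : m ≤ n) {z : Fin (n + 1) → ℂ}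
    (hz : (z (Fin.last n), Fin.init z) ∈ avoidingPairs (coordPairing hmn)) : z ≠ 0 := by
  rintro rfl
  have : NeZero m := ⟨hm.ne'⟩
  obtain ⟨v, hv⟩ := (NormedSpace.sphere_nonempty (x := (0 : EuclideanSpace ℝ (Fin m)))).2
    zero_le_one
  exact hz v hv (by simp [coordPairing_apply, Fin.init])

/-- `Fin.snocEquiv` for constant families, as a homeomorphism. -/
def snocHomeomorph (n : ℕ) (X : Type*) [TopologicalSpace X] :
    X × (Fin n → X) ≃ₜ (Fin (n + 1) → X) where
  toEquiv := Fin.snocEquiv fun _ => X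
  continuous_toFun := Continuous.finSnoc (A := fun _ => X) continuous_snd continuous_fst
  continuous_invFun :=
    (continuous_apply _).prodMk (continuous_pi fun j => continuous_apply j.castSucc)

theorem omegaCone_eq_preimage (hm : 0 < m) (hmn : m ≤ n) :
    {z : Fin (n + 1) → ℂ | z ≠ 0 ∧ ∀ w ∈ SmCone m n, herm n z w ≠ 0} =
      (snocHomeomorph n ℂ).symm ⁻¹' avoidingPairs (coordPairing hmn) := by
  ext z
  rw [Set.mem_ofPred_eq, forall_mem_SmCone_herm_ne_zero_iff hmn]
  exact and_iff_right_of_imp (ne_zero_of_mem_avoidingPairs hm hmn)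

end RealNullVectors

/-- (Theorem 3 / `teo:tres` ii, cone version): for `2 < m ≤ n` the cone over the Kulkarni
discontinuity region is open and connected. -/
theorem omegaCone_connected (m n : ℕ) (hm : 2 < m) (hmn : m ≤ n) :
    IsOpen {z : Fin (n + 1) → ℂ | z ≠ 0 ∧ ∀ w ∈ SmCone m n, herm n z w ≠ 0} ∧
    IsConnected {z : Fin (n + 1) → ℂ | z ≠ 0 ∧ ∀ w ∈ SmCone m n, herm n z w ≠ 0} := by
  have hpath : IsPathConnected (avoidingPairs (coordPairing hmn)) :=
    isPathConnected_avoidingPairs (by simp) (by simpa using hm)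
  rw [omegaCone_eq_preimage (by lia) hmn]
  exact ⟨(isOpen_avoidingPairs (continuous_coordPairing hmn)).preimage (Homeomorph.continuous _),
    (Homeomorph.isConnected_preimage _).2 hpath.isConnected⟩
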